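/- With Γ^L and C^L as defined in the context, there exist a constant c > 0 and an integer k₀ such that for every L = 2^k with k ≥ k₀, every 0 ≤ t ≤ T−1, every −1 ≤ r ≤ t, every a, b ∈ {0,1}, every p ∈ [0,1] (p ∈ (0,1] for C) and every q ∈ (0,1]: |Γ^L_{t,r,a,b}(p,q)| ≤ c and |C^L_{t,r,a}(p)| ≤ c. Equivalently, the unnormalized coefficients 𝚪 = Γ^L/√L (the derivatives of each ket with respect to each Gaussian base variable) are O(1/√L) and all covariances between kets are O(1), uniformly in L. -/

import Mathlib

open MeasureTheory Set Finset Filter Topology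

/-- The defining recursion (from the Tensor-Program analysis of a depth-`L` linear residual
network `x^l = x^{l−1} + L^{−1/2} W^l x^{l−1}` trained for `T` SGD steps under Depth-μP)
for the coefficient functions `Γ^L_{t,r,a,b}(p,q)` and covariance functions `C^L_{t,s,a}(p)`,
together with the output values `f̊_t` and loss derivatives `χ̊_t = ℓ'_t(f̊_t)`.

Conventions: Booleans encode the indices `a, b ∈ {0,1}` (`false = 0`, `true = 1`); the
time index `r, s = −1` refers to the input/output layers `U, V`; `C_{−1,−1,·} ≡ 1`;
`C_{t,s,·} ≡ 0` if exactly one of `t, s` is `−1`; `C` is symmetric; `Γ_{s,r,·,·} ≡ 0` for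
`r > s`; `Γ^L` is constant in `p` on each interval `((l−1)/L, l/L]`. -/
structure IsLinearTP (T L : ℕ) (ξ : ℕ → ℝ) (ℓ' : ℕ → ℝ → ℝ)
    (Γ : ℕ → ℤ → Bool → Bool → ℝ → ℝ → ℝ)
    (C : ℤ → ℤ → Bool → ℝ → ℝ)
    (f χ : ℕ → ℝ) : Prop where
  C_symm : ∀ (t s : ℤ) (b : Bool) (p : ℝ), C t s b p = C s t b p
  C_base : ∀ (b : Bool) (p : ℝ), C (-1) (-1) b p = 1
  C_mixed : ∀ t : ℤ, 0 ≤ t → ∀ (b : Bool) (p : ℝ), C t (-1) b p = 0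
  Γ_vanish : ∀ (t : ℕ) (r : ℤ), (t : ℤ) < r → ∀ (a b : Bool) (p q : ℝ), Γ t r a b p q = 0
  Γ_const : ∀ t : ℕ, t < T → ∀ r : ℤ, -1 ≤ r → r ≤ (t : ℤ) → ∀ a b : Bool,
    ∀ l : ℕ, 1 ≤ l → l ≤ L → ∀ p q : ℝ, ((l : ℝ) - 1) / L < p → p ≤ (l : ℝ) / L →
      0 < q → q ≤ 1 → Γ t r a b p q = Γ t r a b ((l : ℝ) / L) q
  fwd_init : ∀ t : ℕ, t < T → ∀ r : ℤ, -1 ≤ r → r ≤ (t : ℤ) → ∀ b : Bool,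
    ∀ q : ℝ, 0 < q → q ≤ 1 →
      Γ t r false b 0 q = if r = -1 ∧ b = false then ξ t else 0
  fwd_step : ∀ t : ℕ, t < T → ∀ l : ℕ, 1 ≤ l → l ≤ L → ∀ r : ℤ, -1 ≤ r → r ≤ (t : ℤ) →
    ∀ b : Bool, ∀ p q : ℝ, ((l : ℝ) - 1) / L < p → p ≤ (l : ℝ) / L → 0 < q → q ≤ 1 →
      Γ t r false b p q =
        Γ t r false b (((l : ℝ) - 1) / L) q
          + (if (t : ℤ) = r ∧ b = false ∧ (l : ℤ) = ⌈(L : ℝ) * q⌉ then 1 else 0)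
          + (1 / (L : ℝ)) * ∑ s ∈ Finset.range t,
              Γ s r true b ((l : ℝ) / L) q *
                (Γ t (s : ℤ) false true (((l : ℝ) - 1) / L) ((l : ℝ) / L)
                  - C (t : ℤ) (s : ℤ) false ((l : ℝ) / L))
  fwd_C : ∀ t : ℕ, t < T → ∀ s : ℕ, s ≤ t → ∀ l : ℕ, 1 ≤ l → l ≤ L →
    ∀ p : ℝ, ((l : ℝ) - 1) / L < p → p ≤ (l : ℝ) / L →
      C (t : ℤ) (s : ℤ) false p =
        ∑ t' ∈ Finset.Icc (-1 : ℤ) (t : ℤ), ∑ s' ∈ Finset.Icc (-1 : ℤ) (s : ℤ), ∑ b : Bool,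
          ∫ q in Ioc (0 : ℝ) 1,
            Γ t t' false b (((l : ℝ) - 1) / L) q * C t' s' b q *
              Γ s s' false b (((l : ℝ) - 1) / L) q
  f_def : ∀ t : ℕ, t < T → f t = Γ t (-1) false true 1 1
  χ_def : ∀ t : ℕ, t < T → χ t = ℓ' t (f t)
  bwd_init : ∀ t : ℕ, t < T → ∀ r : ℤ, -1 ≤ r → r ≤ (t : ℤ) → ∀ b : Bool,
    ∀ q : ℝ, 0 < q → q ≤ 1 →
      Γ t r true b 1 q = if r = -1 ∧ b = true then χ t else 0
  bwd_step : ∀ t : ℕ, t < T → ∀ l : ℕ, 1 ≤ l → l ≤ L → ∀ r : ℤ, -1 ≤ r → r ≤ (t : ℤ) →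
    ∀ b : Bool, ∀ p q : ℝ, ((l : ℝ) - 2) / L < p → p ≤ ((l : ℝ) - 1) / L → 0 ≤ p →
      0 < q → q ≤ 1 →
      Γ t r true b p q =
        Γ t r true b ((l : ℝ) / L) q
          + (if (t : ℤ) = r ∧ b = true ∧ (l : ℤ) = ⌈(L : ℝ) * q⌉ then 1 else 0)
          + (1 / (L : ℝ)) * ∑ s ∈ Finset.range t,
              Γ s r false b (((l : ℝ) - 1) / L) q *
                (Γ t (s : ℤ) true false ((l : ℝ) / L) ((l : ℝ) / L)
                  - C (t : ℤ) (s : ℤ) true ((l : ℝ) / L))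
  bwd_C : ∀ t : ℕ, t < T → ∀ s : ℕ, s ≤ t → ∀ l : ℕ, 1 ≤ l → l ≤ L →
    ∀ p : ℝ, ((l : ℝ) - 1) / L < p → p ≤ (l : ℝ) / L →
      C (t : ℤ) (s : ℤ) true p =
        ∑ t' ∈ Finset.Icc (-1 : ℤ) (t : ℤ), ∑ s' ∈ Finset.Icc (-1 : ℤ) (s : ℤ), ∑ b : Bool,
          ∫ q in Ioc (0 : ℝ) 1,
            Γ t t' true b ((l : ℝ) / L) q * C t' s' b q * Γ s s' true b ((l : ℝ) / L) q

/-!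
Induct on the time `t`: suppose all coefficients and covariances of earlier times are bounded by
`K`, independently of `L`. Along one sweep, `Γ_{t,t}` has no memory term and is the indicator of the
layers already visited. In the formula for `C_{t,s}`, `s < t`, the terms with `t' = t` therefore
become `L⁻¹ ∑ C_{t,s'}` over the visited layers, while every other term is at most a constant times
`max_{r<t} |Γ_{t,r}|`. Together with the recursion for `Γ_{t,r}`, `r < t`, whose increments are
`L⁻¹` times such quantities, this is a linear discrete Grönwall system with rates of order `1 / L`,
so its growth factor `(1 + O(1 / L)) ^ L` is bounded independently of `L`. The variance `C_{t,t}`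
then solves a Grönwall inequality with bounded data. Between the two sweeps of time `t`, the initial
value `χ_t = ℓ'_t(f_t)` of the backward sweep is bounded because `ℓ'_t` is continuous and `f_t`
stays in a compact interval.
-/

section Gronwall

lemma one_add_div_pow_le_exp {c : ℝ} (hc : 0 ≤ c) {L j : ℕ} (hj : j ≤ L) :
    (1 + c / L) ^ j ≤ Real.exp c := by
  rcases L.eq_zero_or_pos with rfl | hL
  · obtain rfl : j = 0 := by omega
    simpa using hc
  calc (1 + c / L) ^ j ≤ (1 + c / L) ^ L :=
        pow_le_pow_right₀ (le_add_of_nonneg_right (by positivity)) hj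
    _ ≤ Real.exp (c / L) ^ L := by
        gcongr
        rw [add_comm]
        exact Real.add_one_le_exp _
    _ = Real.exp c := by
        rw [← Real.exp_nat_mul]
        congr 1
        field_simp

lemma mul_geom_sum_one_add (c : ℝ) (j : ℕ) :
    c * ∑ i ∈ Finset.range j, (1 + c) ^ i = (1 + c) ^ j - 1 := by
  rw [← geom_sum_mul, mul_comm, add_sub_cancel_left]

/-- The common majorant produced by `coupled_gronwall` from the rate constant `K` and the initial
bound `A`. -/
noncomputable def gronwallConst (K A : ℝ) : ℝ :=
  (1 + 2 * K) * (A * Real.exp (2 * K ^ 2 + 2 * K))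

lemma le_gronwallConst {K A : ℝ} (hK : 0 ≤ K) (hA : 0 ≤ A) : A ≤ gronwallConst K A := by
  have hexp : 1 ≤ Real.exp (2 * K ^ 2 + 2 * K) := Real.one_le_exp (by positivity)
  calc A = 1 * (A * 1) := by ring
    _ ≤ gronwallConst K A := by
        unfold gronwallConst
        gcongr
        linarith

/- The memory `L⁻¹ ∑ i < j, 2 K A ρ ^ i` is a geometric sum which is again at most `A ρ ^ j`, so
that `P j (A ρ ^ j)` and `Q j (2 K A ρ ^ j)` propagate together. -/
lemma coupled_gronwall_geometric {P Q : ℕ → ℝ → Prop} (hPmono : ∀ j, Monotone (P j))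
    (hQmono : ∀ j, Monotone (Q j)) {L : ℕ} {K A ρ : ℝ} (hK : 0 ≤ K) (hA : 0 ≤ A)
    (hρ : ρ = 1 + (2 * K ^ 2 + 2 * K) / L) (h0 : P 0 A)
    (hP : ∀ j < L, ∀ g d, 0 ≤ g → 0 ≤ d → P j g → Q j d → P (j + 1) (g + K / L * (g + d)))
    (hQ : ∀ j < L, ∀ g, ∀ d : ℕ → ℝ, 0 ≤ g → (∀ i, 0 ≤ d i) → P j g → (∀ i < j, Q i (d i)) →
      Q j (K * (g + (∑ i ∈ Finset.range j, d i) / L)))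
    (j : ℕ) (hj : j ≤ L) :
    P j (A * ρ ^ j) ∧ ∀ i < j, Q i (2 * K * (A * ρ ^ i)) := by
  have hρ0 : 0 ≤ ρ := by rw [hρ]; positivity
  have memory_le (j : ℕ) : (∑ i ∈ Finset.range j, 2 * K * (A * ρ ^ i)) / L ≤ A * ρ ^ j := by
    calc (∑ i ∈ Finset.range j, 2 * K * (A * ρ ^ i)) / L
        = A * (2 * K / L * ∑ i ∈ Finset.range j, ρ ^ i) := by
          simp only [← Finset.mul_sum]
          ring
      _ ≤ A * ((2 * K ^ 2 + 2 * K) / L * ∑ i ∈ Finset.range j, ρ ^ i) := by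
          gcongr
          exact le_add_of_nonneg_left (by positivity)
      _ = A * (ρ ^ j - 1) := by rw [hρ, mul_geom_sum_one_add]
      _ ≤ A * ρ ^ j := by gcongr; exact sub_le_self _ zero_le_one
  have Q_of_past {j : ℕ} (hj : j < L) (hPj : P j (A * ρ ^ j))
      (hpast : ∀ i < j, Q i (2 * K * (A * ρ ^ i))) : Q j (2 * K * (A * ρ ^ j)) := by
    refine hQmono j ?_ (hQ j hj _ _ (by positivity) (fun i => by positivity) hPj hpast)
    linarith [mul_le_mul_of_nonneg_left (memory_le j) hK]
  induction j with
  | zero => simpa using h0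
  | succ j ih =>
    obtain ⟨hPj, hpast⟩ := ih (by omega)
    have hQj := Q_of_past hj hPj hpast
    refine ⟨hPmono _ ?_ (hP j hj _ _ (by positivity) (by positivity) hPj hQj),
      Nat.forall_lt_succ_right.2 ⟨hpast, hQj⟩⟩
    calc A * ρ ^ j + K / L * (A * ρ ^ j + 2 * K * (A * ρ ^ j))
        ≤ A * ρ ^ j + K / L * (A * ρ ^ j + 2 * K * (A * ρ ^ j)) + K / L * (A * ρ ^ j) :=
          le_add_of_nonneg_right (by positivity)
      _ = A * ρ ^ (j + 1) := by rw [pow_succ, hρ]; ring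

lemma coupled_gronwall {P Q : ℕ → ℝ → Prop} (hPmono : ∀ j, Monotone (P j))
    (hQmono : ∀ j, Monotone (Q j)) {L : ℕ} {K A : ℝ} (hK : 0 ≤ K) (hA : 0 ≤ A) (h0 : P 0 A)
    (hP : ∀ j < L, ∀ g d, 0 ≤ g → 0 ≤ d → P j g → Q j d → P (j + 1) (g + K / L * (g + d)))
    (hQ : ∀ j < L, ∀ g, ∀ d : ℕ → ℝ, 0 ≤ g → (∀ i, 0 ≤ d i) → P j g → (∀ i < j, Q i (d i)) →
      Q j (K * (g + (∑ i ∈ Finset.range j, d i) / L))) :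
    (∀ j ≤ L, P j (gronwallConst K A)) ∧ ∀ j < L, Q j (gronwallConst K A) := by
  have growth := coupled_gronwall_geometric hPmono hQmono hK hA rfl h0 hP hQ
  have geometric_le (j : ℕ) (hj : j ≤ L) := mul_le_mul_of_nonneg_left
    (one_add_div_pow_le_exp (c := 2 * K ^ 2 + 2 * K) (by positivity) hj) hA
  have exp_nonneg : 0 ≤ A * Real.exp (2 * K ^ 2 + 2 * K) := by positivity
  refine ⟨fun j hj => hPmono j ?_ (growth j hj).1,
    fun j hj => hQmono j ?_ ((growth L le_rfl).2 j hj)⟩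
  · exact (geometric_le j hj).trans (le_mul_of_one_le_left exp_nonneg (by linarith))
  · exact mul_le_mul (by linarith) (geometric_le j hj.le) (by positivity) (by positivity)

end Gronwall

section Sums

lemma abs_sum_le_card_mul {ι : Type*} {s : Finset ι} {F : ι → ℝ} {X : ℝ}
    (h : ∀ i ∈ s, |F i| ≤ X) : |∑ i ∈ s, F i| ≤ s.card * X := by
  rw [← nsmul_eq_mul]
  exact (Finset.abs_sum_le_sum_abs F s).trans (Finset.sum_le_card_nsmul s _ X h)

lemma norm_integral_le_sum_mul_measureReal {α E ι : Type*} [MeasurableSpace α] {μ : Measure α}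
    [NormedAddCommGroup E] [NormedSpace ℝ E] {s : Finset ι} {A : ι → Set α} {c : ι → ℝ}
    {F : α → E} (hA : ∀ i ∈ s, MeasurableSet (A i)) (hμ : ∀ i ∈ s, μ (A i) ≠ ⊤)
    (hc : ∀ i ∈ s, 0 ≤ c i)
    (hF : ∀ᵐ x ∂μ, F x = 0 ∨ ∃ i ∈ s, x ∈ A i ∧ ‖F x‖ ≤ c i) :
    ‖∫ x, F x ∂μ‖ ≤ ∑ i ∈ s, c i * μ.real (A i) := by
  have integrable_step : ∀ i ∈ s, Integrable ((A i).indicator fun _ => c i) μ := fun i hi =>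
    (integrableOn_const (hμ i hi)).integrable_indicator (hA i hi)
  have integral_step : ∫ x, ∑ i ∈ s, (A i).indicator (fun _ => c i) x ∂μ =
      ∑ i ∈ s, c i * μ.real (A i) := by
    rw [integral_finsetSum s integrable_step]
    refine Finset.sum_congr rfl fun i hi => ?_
    rw [integral_indicator_const _ (hA i hi), smul_eq_mul, mul_comm]
  rw [← integral_step]
  refine norm_integral_le_of_norm_le (integrable_finsetSum s integrable_step) ?_
  have indicator_nonneg (x : α) : ∀ i ∈ s, 0 ≤ (A i).indicator (fun _ => c i) x := fun i hi =>
    Set.indicator_nonneg (fun _ _ => hc i hi) x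
  filter_upwards [hF] with x hx
  rcases hx with hx | ⟨i, hi, hxi, hle⟩
  · simpa only [hx, norm_zero] using Finset.sum_nonneg (indicator_nonneg x)
  · calc ‖F x‖ ≤ (A i).indicator (fun _ => c i) x := by rwa [Set.indicator_of_mem hxi]
      _ ≤ _ := Finset.single_le_sum (indicator_nonneg x) hi

end Sums

section Sweep

/-- The positions `((l - 1) / L, l / L]` belonging to layer `l` of a depth-`L` network. -/
def layerCell (L l : ℕ) : Set ℝ :=
  Set.Ioc (((l : ℝ) - 1) / L) ((l : ℝ) / L)

/-- The layer processed by step `j` of a sweep, counting steps from `0`: a forward sweep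
(`false`) visits `1, …, L`, a backward sweep (`true`) visits `L, …, 1`. -/
def sweepLayer (L : ℕ) : Bool → ℕ → ℕ
  | false, j => j + 1
  | true, j => L - j

/-- The depth `p ∈ [0, 1]` that a forward (`false`) or backward (`true`) sweep has reached before
its step `j`. -/
noncomputable def sweepPos (L : ℕ) : Bool → ℕ → ℝ
  | false, j => (j : ℝ) / L
  | true, j => ((L : ℝ) - j) / L

variable {L : ℕ}

lemma measurableSet_layerCell (l : ℕ) : MeasurableSet (layerCell L l) :=
  measurableSet_Ioc

lemma mem_layerCell_iff_eq_ceil (hL : 0 < L) {l : ℕ} {q : ℝ} :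
    q ∈ layerCell L l ↔ (l : ℤ) = ⌈(L : ℝ) * q⌉ := by
  have hL' : (0 : ℝ) < L := Nat.cast_pos.2 hL
  rw [eq_comm, Int.ceil_eq_iff, Int.cast_natCast, layerCell, Set.mem_Ioc, div_lt_iff₀' hL',
    le_div_iff₀' hL']

lemma natCast_div_mem_layerCell (hL : 0 < L) (l : ℕ) : (l : ℝ) / L ∈ layerCell L l := by
  refine ⟨?_, le_rfl⟩
  gcongr
  linarith

lemma layerCell_subset_Ioc {l : ℕ} (hl : 1 ≤ l) (hlL : l ≤ L) :
    layerCell L l ⊆ Set.Ioc (0 : ℝ) 1 := by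
  have hl' : (1 : ℝ) ≤ l := Nat.one_le_cast.2 hl
  exact Set.Ioc_subset_Ioc (div_nonneg (by linarith) L.cast_nonneg)
    (div_le_one_of_le₀ (Nat.cast_le.2 hlL) L.cast_nonneg)

lemma volume_real_layerCell (hL : 0 < L) (l : ℕ) : volume.real (layerCell L l) = 1 / L := by
  rw [layerCell, Real.volume_real_Ioc_of_le (natCast_div_mem_layerCell hL l).1.le]
  ring

lemma sweepLayer_mem_Icc (a : Bool) {j : ℕ} (hj : j < L) : sweepLayer L a j ∈ Set.Icc 1 L := by
  cases a <;> simp only [sweepLayer, Set.mem_Icc] <;> omega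

lemma sweepLayer_injOn (a : Bool) : Set.InjOn (sweepLayer L a) (Set.Iio L) := by
  intro i hi j hj h
  simp only [Set.mem_Iio] at hi hj
  cases a <;> simp only [sweepLayer] at h <;> omega

lemma sweepLayer_div_mem_Ioc (a : Bool) {j : ℕ} (hj : j < L) :
    (sweepLayer L a j : ℝ) / L ∈ Set.Ioc (0 : ℝ) 1 := by
  obtain ⟨hl, hlL⟩ := sweepLayer_mem_Icc a hj
  exact layerCell_subset_Ioc hl hlL (natCast_div_mem_layerCell (by omega) _)

lemma sweepPos_mem_Icc (a : Bool) {j : ℕ} (hj : j ≤ L) : sweepPos L a j ∈ Set.Icc (0 : ℝ) 1 := by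
  have hj' : (j : ℝ) ≤ L := Nat.cast_le.2 hj
  cases a
  · exact ⟨by simp only [sweepPos]; positivity, div_le_one_of_le₀ hj' L.cast_nonneg⟩
  · exact ⟨div_nonneg (by linarith) L.cast_nonneg,
      div_le_one_of_le₀ (sub_le_self _ j.cast_nonneg) L.cast_nonneg⟩

lemma exists_sweepPos_eq (a : Bool) {l : ℕ} (hl : l ≤ L) :
    ∃ j ≤ L, sweepPos L a j = (l : ℝ) / L := by
  cases a
  · exact ⟨l, hl, rfl⟩
  · exact ⟨L - l, by omega, by simp only [sweepPos, Nat.cast_sub hl, sub_sub_cancel]⟩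

lemma exists_sweepLayer_eq (a : Bool) {l : ℕ} (hl : 1 ≤ l) (hlL : l ≤ L) :
    ∃ j < L, sweepLayer L a j = l := by
  cases a
  · exact ⟨l - 1, by omega, by simp only [sweepLayer]; omega⟩
  · exact ⟨L - l, by omega, by simp only [sweepLayer]; omega⟩

lemma exists_mem_layerCell (hL : 0 < L) {p : ℝ} (hp : p ∈ Set.Ioc (0 : ℝ) 1) :
    ∃ l : ℕ, 1 ≤ l ∧ l ≤ L ∧ p ∈ layerCell L l := by
  have hLp : 0 < (L : ℝ) * p := mul_pos (Nat.cast_pos.2 hL) hp.1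
  refine ⟨⌈(L : ℝ) * p⌉₊, Nat.ceil_pos.2 hLp, Nat.ceil_le.2 ?_, ?_⟩
  · exact mul_le_of_le_one_right L.cast_nonneg hp.2
  · rw [mem_layerCell_iff_eq_ceil hL, Int.natCast_ceil_eq_ceil hLp.le]

lemma exists_mem_layerCell_sweepLayer (hL : 0 < L) (a : Bool) {p : ℝ}
    (hp : p ∈ Set.Ioc (0 : ℝ) 1) : ∃ j < L, p ∈ layerCell L (sweepLayer L a j) := by
  obtain ⟨l, hl, hlL, hpl⟩ := exists_mem_layerCell hL hp
  obtain ⟨j, hj, rfl⟩ := exists_sweepLayer_eq a hl hlL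
  exact ⟨j, hj, hpl⟩

lemma eq_of_mem_layerCell_sweepLayer (a : Bool) {i j : ℕ} (hi : i < L) (hj : j < L) {q : ℝ}
    (hqi : q ∈ layerCell L (sweepLayer L a i)) (hqj : q ∈ layerCell L (sweepLayer L a j)) :
    i = j := by
  rw [mem_layerCell_iff_eq_ceil (by omega)] at hqi hqj
  exact sweepLayer_injOn a hi hj (by exact_mod_cast hqi.trans hqj.symm)

end Sweep

/-- `K` bounds all coefficients and covariances which a sweep in direction `a` computes at time
`t`. -/
structure SweepBounded (Γ : ℕ → ℤ → Bool → Bool → ℝ → ℝ → ℝ) (C : ℤ → ℤ → Bool → ℝ → ℝ)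
    (t : ℕ) (a : Bool) (K : ℝ) : Prop where
  coeff_le : ∀ r ∈ Set.Icc (-1 : ℤ) t, ∀ b, ∀ p ∈ Set.Icc (0 : ℝ) 1, ∀ q ∈ Set.Ioc (0 : ℝ) 1,
    |Γ t r a b p q| ≤ K
  cov_le : ∀ r ∈ Set.Icc (-1 : ℤ) t, ∀ p ∈ Set.Ioc (0 : ℝ) 1, |C t r a p| ≤ K

/-- `K` bounds all coefficients and covariances of the times before `t`. -/
def BoundedBefore (Γ : ℕ → ℤ → Bool → Bool → ℝ → ℝ → ℝ) (C : ℤ → ℤ → Bool → ℝ → ℝ)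
    (t : ℕ) (K : ℝ) : Prop :=
  ∀ s < t, ∀ a, SweepBounded Γ C s a K

/-- `M` bounds the time-`t` coefficients of earlier times which are reached before step `j` of a
sweep in direction `a`. -/
def SweepCoeffLE (Γ : ℕ → ℤ → Bool → Bool → ℝ → ℝ → ℝ) (L t : ℕ) (a : Bool) (j : ℕ) (M : ℝ) :
    Prop :=
  ∀ r ∈ Set.Ico (-1 : ℤ) t, ∀ b, ∀ q ∈ Set.Ioc (0 : ℝ) 1, |Γ t r a b (sweepPos L a j) q| ≤ M

/-- `N` bounds the covariances of time `t` with the times `s < S` on the layer processed by step `j`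
of a sweep in direction `a`. -/
def SweepCovLE (C : ℤ → ℤ → Bool → ℝ → ℝ) (L t S : ℕ) (a : Bool) (j : ℕ) (N : ℝ) : Prop :=
  ∀ s : ℕ, s < S → ∀ p ∈ layerCell L (sweepLayer L a j), |C t s a p| ≤ N

/-- A bound for the coefficients `Γ t r`, `r < t`, and covariances `C t s`, `s < t`, of one sweep at
time `t`, given a bound `K` for all earlier times and a bound `W` for the input of the sweep. The
summand `K` makes it monotone along the induction. -/
noncomputable def sweepConst (t : ℕ) (K W : ℝ) : ℝ :=
  K + gronwallConst (2 * (t + 2) ^ 2 * K ^ 2) W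

lemma le_sweepConst (t : ℕ) (K : ℝ) {W : ℝ} (hW : 0 ≤ W) : K ≤ sweepConst t K W :=
  le_add_of_nonneg_right (hW.trans (le_gronwallConst (by positivity) hW))

lemma gronwallConst_le_sweepConst (t : ℕ) (W : ℝ) {K : ℝ} (hK : 0 ≤ K) :
    gronwallConst (2 * (t + 2) ^ 2 * K ^ 2) W ≤ sweepConst t K W :=
  le_add_of_nonneg_left hK

section Bounds

variable {Γ : ℕ → ℤ → Bool → Bool → ℝ → ℝ → ℝ} {C : ℤ → ℤ → Bool → ℝ → ℝ} {L t S : ℕ}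
  {a : Bool} {K K' : ℝ}

lemma SweepBounded.mono (h : SweepBounded Γ C t a K) (hK : K ≤ K') : SweepBounded Γ C t a K' :=
  ⟨fun r hr b p hp q hq => (h.coeff_le r hr b p hp q hq).trans hK,
    fun r hr p hp => (h.cov_le r hr p hp).trans hK⟩

lemma BoundedBefore.mono (h : BoundedBefore Γ C t K) (hK : K ≤ K') : BoundedBefore Γ C t K' :=
  fun s hs a => (h s hs a).mono hK

lemma SweepCoeffLE.monotone (Γ : ℕ → ℤ → Bool → Bool → ℝ → ℝ → ℝ) (L t : ℕ) (a : Bool) (j : ℕ) :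
    Monotone (SweepCoeffLE Γ L t a j) :=
  fun _ _ hM h r hr b q hq => (h r hr b q hq).trans hM

lemma SweepCovLE.monotone (C : ℤ → ℤ → Bool → ℝ → ℝ) (L t S : ℕ) (a : Bool) (j : ℕ) :
    Monotone (SweepCovLE C L t S a j) :=
  fun _ _ hN h s hs p hp => (h s hs p hp).trans hN

end Bounds

namespace IsLinearTP

variable {T L : ℕ} {ξ : ℕ → ℝ} {ℓ' : ℕ → ℝ → ℝ} {Γ : ℕ → ℤ → Bool → Bool → ℝ → ℝ → ℝ}
  {C : ℤ → ℤ → Bool → ℝ → ℝ} {f χ : ℕ → ℝ} {t : ℕ}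

lemma coeff_sweepPos_zero (H : IsLinearTP T L ξ ℓ' Γ C f χ) (hL : 0 < L) (ht : t < T) (a : Bool)
    {r : ℤ} (hr : r ∈ Set.Icc (-1 : ℤ) t) (b : Bool) {q : ℝ} (hq : q ∈ Set.Ioc (0 : ℝ) 1) :
    Γ t r a b (sweepPos L a 0) q =
      if r = -1 ∧ b = a then (if a then χ t else ξ t) else 0 := by
  cases a
  · simpa [sweepPos] using H.fwd_init t ht r hr.1 hr.2 b q hq.1 hq.2
  · simpa [sweepPos, hL.ne'] using H.bwd_init t ht r hr.1 hr.2 b q hq.1 hq.2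

lemma coeff_sweepPos_succ (H : IsLinearTP T L ξ ℓ' Γ C f χ) (ht : t < T) (a : Bool)
    {j : ℕ} (hj : j < L) {r : ℤ} (hr : r ∈ Set.Icc (-1 : ℤ) t) (b : Bool) {q : ℝ}
    (hq : q ∈ Set.Ioc (0 : ℝ) 1) :
    Γ t r a b (sweepPos L a (j + 1)) q =
      Γ t r a b (sweepPos L a j) q
        + (if (t : ℤ) = r ∧ b = a ∧ (sweepLayer L a j : ℤ) = ⌈(L : ℝ) * q⌉ then 1 else 0)
        + (1 / (L : ℝ)) * ∑ s ∈ Finset.range t, Γ s r (!a) b (sweepPos L a (j + 1)) q *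
            (Γ t (s : ℤ) a (!a) (sweepPos L a j) ((sweepLayer L a j : ℝ) / L)
              - C (t : ℤ) (s : ℤ) a ((sweepLayer L a j : ℝ) / L)) := by
  have hL : (0 : ℝ) < L := Nat.cast_pos.2 (by omega)
  cases a
  · have := H.fwd_step t ht (j + 1) (by omega) (by omega) r hr.1 hr.2 b (((j + 1 : ℕ) : ℝ) / L) q
      (natCast_div_mem_layerCell (by omega) _).1 le_rfl hq.1 hq.2
    simpa [sweepPos, sweepLayer] using this
  · have layer_sub_one : ((L - j : ℕ) : ℝ) - 1 = L - (j + 1 : ℕ) := by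
      rw [Nat.cast_sub hj.le]
      push_cast
      ring
    have := H.bwd_step t ht (L - j) (by omega) (by omega) r hr.1 hr.2 b
      ((((L - j : ℕ) : ℝ) - 1) / L) q (by gcongr; norm_num) le_rfl
      (by rw [layer_sub_one]; exact (sweepPos_mem_Icc true hj).1) hq.1 hq.2
    rw [layer_sub_one, Nat.cast_sub hj.le] at this
    simpa only [sweepPos, sweepLayer, Nat.cast_sub hj.le, Bool.not_true] using this

lemma cov_eq_of_mem_layerCell (H : IsLinearTP T L ξ ℓ' Γ C f χ) (ht : t < T) (a : Bool) {j : ℕ}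
    (hj : j < L) {s : ℕ} (hs : s ≤ t) {p : ℝ} (hp : p ∈ layerCell L (sweepLayer L a j)) :
    C (t : ℤ) (s : ℤ) a p =
      ∑ t' ∈ Finset.Icc (-1 : ℤ) (t : ℤ), ∑ s' ∈ Finset.Icc (-1 : ℤ) (s : ℤ), ∑ b : Bool,
        ∫ q in Set.Ioc (0 : ℝ) 1,
          Γ t t' a b (sweepPos L a j) q * C t' s' b q * Γ s s' a b (sweepPos L a j) q := by
  obtain ⟨hl, hlL⟩ := sweepLayer_mem_Icc a hj
  cases a
  · simpa [sweepPos, sweepLayer] using H.fwd_C t ht s hs _ hl hlL p hp.1 hp.2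
  · simpa only [sweepPos, sweepLayer, Nat.cast_sub hj.le] using
      H.bwd_C t ht s hs _ hl hlL p hp.1 hp.2

lemma exists_coeff_eq_sweepPos (H : IsLinearTP T L ξ ℓ' Γ C f χ) (hL : 0 < L) (ht : t < T)
    (a : Bool) {p : ℝ} (hp : p ∈ Set.Icc (0 : ℝ) 1) :
    ∃ j ≤ L, ∀ r ∈ Set.Icc (-1 : ℤ) t, ∀ b, ∀ q ∈ Set.Ioc (0 : ℝ) 1,
      Γ t r a b p q = Γ t r a b (sweepPos L a j) q := by
  rcases hp.1.eq_or_lt with rfl | hp0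
  · obtain ⟨j, hj, hjp⟩ := exists_sweepPos_eq a (Nat.zero_le L)
    exact ⟨j, hj, fun r _ b q _ => by rw [hjp, Nat.cast_zero, zero_div]⟩
  · obtain ⟨l, hl, hlL, hpl⟩ := exists_mem_layerCell hL ⟨hp0, hp.2⟩
    obtain ⟨j, hj, hjl⟩ := exists_sweepPos_eq a hlL
    exact ⟨j, hj, fun r hr b q hq => by
      rw [hjl, H.Γ_const t ht r hr.1 hr.2 a b l hl hlL p q hpl.1 hpl.2 hq.1 hq.2]⟩

/- The memory sum drops out because `Γ s t = 0` for `s < t`, so `Γ t t` is the indicator of the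
layers already visited. -/
lemma coeff_self_eq_zero_or_one (H : IsLinearTP T L ξ ℓ' Γ C f χ) (hL : 0 < L)
    (ht : t < T) (a b : Bool) {q : ℝ} (hq : q ∈ Set.Ioc (0 : ℝ) 1) {j : ℕ} (hj : j ≤ L) :
    Γ t t a b (sweepPos L a j) q = 0 ∨
      Γ t t a b (sweepPos L a j) q = 1 ∧ b = a ∧
        ∃ i < j, q ∈ layerCell L (sweepLayer L a i) := by
  have ht_mem : (t : ℤ) ∈ Set.Icc (-1 : ℤ) t := ⟨by omega, le_rfl⟩
  induction j with
  | zero =>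
    left
    rw [H.coeff_sweepPos_zero hL ht a ht_mem b hq, if_neg (by omega)]
  | succ j ih =>
    have no_memory : ∀ s ∈ Finset.range t, Γ s t (!a) b (sweepPos L a (j + 1)) q *
        (Γ t (s : ℤ) a (!a) (sweepPos L a j) ((sweepLayer L a j : ℝ) / L)
          - C (t : ℤ) (s : ℤ) a ((sweepLayer L a j : ℝ) / L)) = 0 := fun s hs => by
      rw [H.Γ_vanish s t (by exact_mod_cast Finset.mem_range.1 hs), zero_mul]
    rw [H.coeff_sweepPos_succ ht a hj ht_mem b hq, Finset.sum_eq_zero no_memory, mul_zero,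
      add_zero]
    by_cases hvisit : b = a ∧ (sweepLayer L a j : ℤ) = ⌈(L : ℝ) * q⌉
    · right
      have hqj := (mem_layerCell_iff_eq_ceil hL).2 hvisit.2
      rw [if_pos ⟨rfl, hvisit⟩]
      rcases ih (by omega) with hzero | ⟨-, -, i, hi, hqi⟩
      · exact ⟨by rw [hzero, zero_add], hvisit.1, j, j.lt_succ_self, hqj⟩
      · exact absurd (eq_of_mem_layerCell_sweepLayer a (by omega) hj hqi hqj) hi.ne
    · rw [if_neg fun h => hvisit h.2, add_zero]
      refine (ih (by omega)).imp_right ?_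
      rintro ⟨hone, hba, i, hi, hqi⟩
      exact ⟨hone, hba, i, by omega, hqi⟩

lemma abs_coeff_self_le_one (H : IsLinearTP T L ξ ℓ' Γ C f χ) (hL : 0 < L)
    (ht : t < T) (a b : Bool) {q : ℝ} (hq : q ∈ Set.Ioc (0 : ℝ) 1) {j : ℕ} (hj : j ≤ L) :
    |Γ t t a b (sweepPos L a j) q| ≤ 1 := by
  rcases H.coeff_self_eq_zero_or_one hL ht a b hq hj with h | ⟨h, -⟩ <;> simp [h]

lemma abs_integral_coeff_self_mul_le (H : IsLinearTP T L ξ ℓ' Γ C f χ) (hL : 0 < L)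
    (ht : t < T) (a b : Bool) {j : ℕ} (hj : j ≤ L) {h : ℝ → ℝ} {e : ℕ → ℝ} (he : ∀ i, 0 ≤ e i)
    (hh : b = a → ∀ i < j, ∀ q ∈ layerCell L (sweepLayer L a i), |h q| ≤ e i) :
    |∫ q in Set.Ioc (0 : ℝ) 1, Γ t t a b (sweepPos L a j) q * h q| ≤
      (∑ i ∈ Finset.range j, e i) / L := by
  have integral_le := norm_integral_le_sum_mul_measureReal
    (μ := volume.restrict (Set.Ioc (0 : ℝ) 1)) (s := Finset.range j)
    (A := fun i => layerCell L (sweepLayer L a i)) (c := e)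
    (F := fun q => Γ t t a b (sweepPos L a j) q * h q)
    (fun i _ => measurableSet_layerCell _) (fun i _ => measure_ne_top _ _) (fun i _ => he i) ?_
  · refine integral_le.trans ?_
    rw [Finset.sum_div]
    refine Finset.sum_le_sum fun i _ => ?_
    calc e i * (volume.restrict (Set.Ioc (0 : ℝ) 1)).real (layerCell L (sweepLayer L a i))
        ≤ e i * volume.real (layerCell L (sweepLayer L a i)) :=
          mul_le_mul_of_nonneg_left
            (ENNReal.toReal_mono measure_Ioc_lt_top.ne (Measure.restrict_apply_le _ _)) (he i)
      _ = e i / L := by rw [volume_real_layerCell hL, mul_one_div]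
  · filter_upwards [ae_restrict_mem measurableSet_Ioc] with q hq
    rcases H.coeff_self_eq_zero_or_one hL ht a b hq hj with hzero | ⟨hone, hba, i, hi, hqi⟩
    · exact Or.inl (by rw [hzero, zero_mul])
    · exact Or.inr ⟨i, Finset.mem_range.2 hi, hqi, by
        rw [hone, one_mul]; exact hh hba i hi q hqi⟩

lemma abs_integral_coeff_mul_le (H : IsLinearTP T L ξ ℓ' Γ C f χ) (hL : 0 < L) (ht : t < T)
    (a b : Bool) {j : ℕ} (hj : j ≤ L) {K g : ℝ} {d : ℕ → ℝ} (hK : 0 ≤ K) (hg : 0 ≤ g)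
    (hd : ∀ i, 0 ≤ d i) (hcoeff : SweepCoeffLE Γ L t a j g) {t' : ℤ}
    (ht' : t' ∈ Set.Icc (-1 : ℤ) t) {h : ℝ → ℝ}
    (hbefore : t' < t → ∀ q ∈ Set.Ioc (0 : ℝ) 1, |h q| ≤ K)
    (hself : t' = t → b = a → ∀ i < j, ∀ q ∈ layerCell L (sweepLayer L a i), |h q| ≤ K * d i) :
    |∫ q in Set.Ioc (0 : ℝ) 1, Γ t t' a b (sweepPos L a j) q * h q| ≤
      K * (g + (∑ i ∈ Finset.range j, d i) / L) := by
  rcases ht'.2.eq_or_lt with heq | hlt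
  · calc |∫ q in Set.Ioc (0 : ℝ) 1, Γ t t' a b (sweepPos L a j) q * h q|
        ≤ (∑ i ∈ Finset.range j, K * d i) / L := by
          rw [heq]
          exact H.abs_integral_coeff_self_mul_le hL ht a b hj (fun i => mul_nonneg hK (hd i))
            (hself heq)
      _ = K * ((∑ i ∈ Finset.range j, d i) / L) := by rw [← Finset.mul_sum, mul_div_assoc]
      _ ≤ K * (g + (∑ i ∈ Finset.range j, d i) / L) := by
          gcongr
          exact le_add_of_nonneg_left hg
  · have integrand_le : ∀ q ∈ Set.Ioc (0 : ℝ) 1,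
        ‖Γ t t' a b (sweepPos L a j) q * h q‖ ≤ g * K := fun q hq => by
      rw [norm_mul]
      exact mul_le_mul (hcoeff t' ⟨ht'.1, hlt⟩ b q hq) (hbefore hlt q hq) (norm_nonneg _) hg
    calc |∫ q in Set.Ioc (0 : ℝ) 1, Γ t t' a b (sweepPos L a j) q * h q|
        ≤ g * K * volume.real (Set.Ioc (0 : ℝ) 1) :=
          norm_setIntegral_le_of_norm_le_const measure_Ioc_lt_top integrand_le
      _ = K * g := by rw [Real.volume_real_Ioc_of_le zero_le_one]; ring
      _ ≤ K * (g + (∑ i ∈ Finset.range j, d i) / L) := by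
          gcongr
          exact le_add_of_nonneg_right
            (div_nonneg (Finset.sum_nonneg fun i _ => hd i) L.cast_nonneg)

lemma abs_cov_le (H : IsLinearTP T L ξ ℓ' Γ C f χ) (hL : 0 < L) (ht : t < T) (a : Bool) {j : ℕ}
    (hj : j < L) {s : ℕ} (hs : s ≤ t) {K g : ℝ} {d : ℕ → ℝ} (hK : 0 ≤ K) (hg : 0 ≤ g)
    (hd : ∀ i, 0 ≤ d i)
    (hΓ : ∀ s' ∈ Set.Icc (-1 : ℤ) s, ∀ b, ∀ q ∈ Set.Ioc (0 : ℝ) 1,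
      |Γ s s' a b (sweepPos L a j) q| ≤ K)
    (hCΓ : ∀ t' ∈ Set.Ico (-1 : ℤ) t, ∀ s' ∈ Set.Icc (-1 : ℤ) s, ∀ b, ∀ q ∈ Set.Ioc (0 : ℝ) 1,
      |C t' s' b q * Γ s s' a b (sweepPos L a j) q| ≤ K)
    (hcoeff : SweepCoeffLE Γ L t a j g) (hcov : ∀ i < j, SweepCovLE C L t (s + 1) a i (d i))
    {p : ℝ} (hp : p ∈ layerCell L (sweepLayer L a j)) :
    |C t s a p| ≤ 2 * (t + 2) ^ 2 * K * (g + (∑ i ∈ Finset.range j, d i) / L) := by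
  have self_le : ∀ s' ∈ Set.Icc (-1 : ℤ) s, ∀ i < j, ∀ q ∈ layerCell L (sweepLayer L a i),
      |C t s' a q * Γ s s' a a (sweepPos L a j) q| ≤ K * d i := by
    intro s' hs' i hi q hq
    obtain ⟨hl, hlL⟩ := sweepLayer_mem_Icc a (hi.trans hj)
    have hΓ_le := hΓ s' hs' a q (layerCell_subset_Ioc hl hlL hq)
    rw [abs_mul, mul_comm]
    refine mul_le_mul hΓ_le ?_ (abs_nonneg _) hK
    rcases hs'.1.eq_or_lt with rfl | hnonneg
    · rw [H.C_mixed t (by omega), abs_zero]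
      exact hd i
    · lift s' to ℕ using by omega
      exact hcov i hi s' (by have := hs'.2; omega) q hq
  have term_le : ∀ t' ∈ Finset.Icc (-1 : ℤ) t, ∀ s' ∈ Finset.Icc (-1 : ℤ) s, ∀ b,
      |∫ q in Set.Ioc (0 : ℝ) 1, Γ t t' a b (sweepPos L a j) q *
        (C t' s' b q * Γ s s' a b (sweepPos L a j) q)| ≤
          K * (g + (∑ i ∈ Finset.range j, d i) / L) := by
    intro t' ht' s' hs' b
    rw [Finset.mem_Icc] at ht' hs'
    refine H.abs_integral_coeff_mul_le hL ht a b hj.le hK hg hd hcoeff ht'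
      (fun hlt => hCΓ t' ⟨ht'.1, hlt⟩ s' hs' b) ?_
    rintro rfl rfl
    exact self_le s' hs'
  have card_Icc (n : ℕ) : ((Finset.Icc (-1 : ℤ) n).card : ℝ) = n + 2 := by
    rw [Int.card_Icc]
    exact_mod_cast (by omega : ((n : ℤ) + 1 - -1).toNat = n + 2)
  have rhs_nonneg : 0 ≤ K * (g + (∑ i ∈ Finset.range j, d i) / L) :=
    mul_nonneg hK (add_nonneg hg (div_nonneg (Finset.sum_nonneg fun i _ => hd i) L.cast_nonneg))
  rw [H.cov_eq_of_mem_layerCell ht a hj hs hp]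
  simp only [mul_assoc]
  refine (abs_sum_le_card_mul fun t' ht' => abs_sum_le_card_mul fun s' hs' =>
    abs_sum_le_card_mul fun b _ => term_le t' ht' s' hs' b).trans ?_
  rw [card_Icc, card_Icc, Finset.card_univ, Fintype.card_bool, Nat.cast_ofNat]
  calc (t + 2 : ℝ) * ((s + 2) * (2 * (K * (g + (∑ i ∈ Finset.range j, d i) / L))))
      ≤ (t + 2) * ((t + 2) * (2 * (K * (g + (∑ i ∈ Finset.range j, d i) / L)))) := by gcongr
    _ = _ := by ring

lemma abs_cov_le_of_boundedBefore (H : IsLinearTP T L ξ ℓ' Γ C f χ) {K : ℝ} (hK : 1 ≤ K)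
    (hbefore : BoundedBefore Γ C t K) {r s : ℤ} (hr : r ∈ Set.Ico (-1 : ℤ) t)
    (hs : s ∈ Set.Ico (-1 : ℤ) t) (b : Bool) {q : ℝ} (hq : q ∈ Set.Ioc (0 : ℝ) 1) :
    |C r s b q| ≤ K := by
  wlog hsr : s ≤ r generalizing r s
  · rw [H.C_symm]
    exact this hs hr (le_of_not_ge hsr)
  rcases hr.1.eq_or_lt with rfl | hr0
  · obtain rfl : s = -1 := le_antisymm hsr hs.1
    rwa [H.C_base, abs_one]
  · lift r to ℕ using by omega
    exact (hbefore r (by exact_mod_cast hr.2) b).cov_le s ⟨hs.1, hsr⟩ q hq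

lemma sweepCoeffLE_zero (H : IsLinearTP T L ξ ℓ' Γ C f χ) (hL : 0 < L) (ht : t < T) {a : Bool}
    {W : ℝ} (hinit : |if a then χ t else ξ t| ≤ W) : SweepCoeffLE Γ L t a 0 W := by
  intro r hr b q hq
  rw [H.coeff_sweepPos_zero hL ht a ⟨hr.1, hr.2.le⟩ b hq]
  split
  · exact hinit
  · exact abs_zero.trans_le ((abs_nonneg _).trans hinit)

lemma sweepCoeffLE_succ (H : IsLinearTP T L ξ ℓ' Γ C f χ) (ht : t < T) {a : Bool} {j : ℕ}
    (hj : j < L) {K g d : ℝ} (hK : 0 ≤ K) (hbefore : BoundedBefore Γ C t K)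
    (hcoeff : SweepCoeffLE Γ L t a j g) (hcov : SweepCovLE C L t t a j d) :
    SweepCoeffLE Γ L t a (j + 1) (g + t * K / L * (g + d)) := by
  intro r hr b q hq
  have memory_le : ∀ s ∈ Finset.range t, |Γ s r (!a) b (sweepPos L a (j + 1)) q *
      (Γ t s a (!a) (sweepPos L a j) ((sweepLayer L a j : ℝ) / L)
        - C t s a ((sweepLayer L a j : ℝ) / L))| ≤ K * (g + d) := by
    intro s hs
    have hst := Finset.mem_range.1 hs
    have earlier_le : |Γ s r (!a) b (sweepPos L a (j + 1)) q| ≤ K := by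
      rcases le_or_gt r s with hrs | hsr
      · exact (hbefore s hst _).coeff_le r ⟨hr.1, hrs⟩ b _ (sweepPos_mem_Icc a hj) q hq
      · rwa [H.Γ_vanish s r hsr, abs_zero]
    have coeff_le := hcoeff s ⟨by omega, by omega⟩ (!a) _ (sweepLayer_div_mem_Ioc a hj)
    have cov_le := hcov s hst _ (natCast_div_mem_layerCell (by omega) _)
    rw [abs_mul]
    exact mul_le_mul earlier_le ((abs_sub _ _).trans (add_le_add coeff_le cov_le))
      (abs_nonneg _) hK
  have sum_le := abs_sum_le_card_mul memory_le
  rw [Finset.card_range] at sum_le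
  rw [H.coeff_sweepPos_succ ht a hj ⟨hr.1, hr.2.le⟩ b hq, if_neg fun h => hr.2.ne' h.1, add_zero]
  refine (abs_add_le _ _).trans (add_le_add (hcoeff r hr b q hq) ?_)
  rw [abs_mul, abs_of_nonneg (by positivity)]
  calc 1 / (L : ℝ) * |_| ≤ 1 / (L : ℝ) * (t * (K * (g + d))) := by gcongr
    _ = t * K / L * (g + d) := by ring

lemma sweepCovLE_of_boundedBefore (H : IsLinearTP T L ξ ℓ' Γ C f χ) (hL : 0 < L) (ht : t < T)
    {a : Bool} {j : ℕ} (hj : j < L) {K g : ℝ} {d : ℕ → ℝ} (hK : 1 ≤ K)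
    (hbefore : BoundedBefore Γ C t K) (hg : 0 ≤ g) (hd : ∀ i, 0 ≤ d i)
    (hcoeff : SweepCoeffLE Γ L t a j g) (hcov : ∀ i < j, SweepCovLE C L t t a i (d i)) :
    SweepCovLE C L t t a j (2 * (t + 2) ^ 2 * K ^ 2 * (g + (∑ i ∈ Finset.range j, d i) / L)) := by
  intro s hs p hp
  have earlier_le : ∀ s' ∈ Set.Icc (-1 : ℤ) s, ∀ b, ∀ q ∈ Set.Ioc (0 : ℝ) 1,
      |Γ s s' a b (sweepPos L a j) q| ≤ K := fun s' hs' b q hq =>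
    (hbefore s hs a).coeff_le s' hs' b _ (sweepPos_mem_Icc a hj.le) q hq
  refine H.abs_cov_le hL ht a hj hs.le (by positivity) hg hd
    (fun s' hs' b q hq => (earlier_le s' hs' b q hq).trans (le_self_pow₀ hK two_ne_zero))
    (fun t' ht' s' hs' b q hq => ?_) hcoeff
    (fun i hi s' hs' => hcov i hi s' (by omega)) hp
  rw [abs_mul, sq]
  exact mul_le_mul
    (H.abs_cov_le_of_boundedBefore hK hbefore ht' ⟨hs'.1, hs'.2.trans_lt (by omega)⟩ b hq)
    (earlier_le s' hs' b q hq) (abs_nonneg _) (by linarith)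

lemma sweep_gronwallConst (H : IsLinearTP T L ξ ℓ' Γ C f χ) (hL : 0 < L) (ht : t < T)
    {a : Bool} {K W : ℝ} (hK : 1 ≤ K) (hbefore : BoundedBefore Γ C t K)
    (hinit : |if a then χ t else ξ t| ≤ W) :
    (∀ j ≤ L, SweepCoeffLE Γ L t a j (gronwallConst (2 * (t + 2) ^ 2 * K ^ 2) W)) ∧
      ∀ j < L, SweepCovLE C L t t a j (gronwallConst (2 * (t + 2) ^ 2 * K ^ 2) W) := by
  have rate_le : t * K ≤ 2 * (t + 2) ^ 2 * K ^ 2 := by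
    gcongr
    · nlinarith
    · exact le_self_pow₀ hK two_ne_zero
  refine coupled_gronwall (SweepCoeffLE.monotone Γ L t a) (SweepCovLE.monotone C L t t a)
    (by positivity) ((abs_nonneg _).trans hinit) (H.sweepCoeffLE_zero hL ht hinit) ?_ ?_
  · intro j hj g d hg hd hcoeff hcov
    refine SweepCoeffLE.monotone Γ L t a _ ?_
      (H.sweepCoeffLE_succ ht hj (by linarith) hbefore hcoeff hcov)
    gcongr
  · intro j hj g d hg hd hcoeff hcov
    exact H.sweepCovLE_of_boundedBefore hL ht hj hK hbefore hg hd hcoeff hcov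

section Variance

variable {a : Bool} {c : ℝ}

lemma abs_coeff_le_of_sweepCoeffLE (H : IsLinearTP T L ξ ℓ' Γ C f χ) (hL : 0 < L) (ht : t < T)
    (hc : 1 ≤ c) {j : ℕ} (hj : j ≤ L) (hcoeff : SweepCoeffLE Γ L t a j c) {r : ℤ}
    (hr : r ∈ Set.Icc (-1 : ℤ) t) (b : Bool) {q : ℝ} (hq : q ∈ Set.Ioc (0 : ℝ) 1) :
    |Γ t r a b (sweepPos L a j) q| ≤ c := by
  rcases hr.2.eq_or_lt with rfl | hrt
  · exact (H.abs_coeff_self_le_one hL ht a b hq hj).trans hc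
  · exact hcoeff r ⟨hr.1, hrt⟩ b q hq

lemma abs_cov_mul_coeff_self_le (H : IsLinearTP T L ξ ℓ' Γ C f χ) (hL : 0 < L) (ht : t < T)
    (hc : 0 ≤ c) (hcov : ∀ j < L, SweepCovLE C L t t a j c) {j : ℕ} (hj : j ≤ L) {r : ℤ}
    (hr : r ∈ Set.Ico (-1 : ℤ) t) (b : Bool) {q : ℝ} (hq : q ∈ Set.Ioc (0 : ℝ) 1) :
    |C r t b q * Γ t t a b (sweepPos L a j) q| ≤ c := by
  rcases H.coeff_self_eq_zero_or_one hL ht a b hq hj with hzero | ⟨hone, rfl, i, hi, hqi⟩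
  · rwa [hzero, mul_zero, abs_zero]
  rw [hone, mul_one, H.C_symm]
  rcases hr.1.eq_or_lt with rfl | hr0
  · rwa [H.C_mixed t (by omega), abs_zero]
  · lift r to ℕ using by omega
    exact hcov i (by omega) r (by exact_mod_cast hr.2) q hqi

lemma sweepCovLE_succ_of_past (H : IsLinearTP T L ξ ℓ' Γ C f χ) (hL : 0 < L) (ht : t < T)
    (hc : 1 ≤ c) (hbefore : BoundedBefore Γ C t c) (hcov : ∀ j < L, SweepCovLE C L t t a j c)
    {j : ℕ} (hj : j < L) (hcoeff : SweepCoeffLE Γ L t a j c) {d : ℕ → ℝ} (hd : ∀ i, 0 ≤ d i)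
    (hpast : ∀ i < j, SweepCovLE C L t (t + 1) a i (d i)) :
    SweepCovLE C L t (t + 1) a j
      (2 * (t + 2) ^ 2 * c ^ 2 * (c + (∑ i ∈ Finset.range j, d i) / L)) := by
  have hc0 : 0 ≤ c := by linarith
  have hcc : c ≤ c ^ 2 := le_self_pow₀ hc two_ne_zero
  intro s hs p hp
  rcases (Nat.lt_succ_iff.1 hs).lt_or_eq with hst | rfl
  · exact H.sweepCovLE_of_boundedBefore hL ht hj hc hbefore hc0 hd hcoeff
      (fun i hi s' hs' => hpast i hi s' (by omega)) s hst p hp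
  have coeff_le {r : ℤ} (hr : r ∈ Set.Icc (-1 : ℤ) s) (b : Bool) {q : ℝ}
      (hq : q ∈ Set.Ioc (0 : ℝ) 1) : |Γ s r a b (sweepPos L a j) q| ≤ c :=
    H.abs_coeff_le_of_sweepCoeffLE hL ht hc hj.le hcoeff hr b hq
  refine H.abs_cov_le hL ht a hj le_rfl (sq_nonneg c) hc0 hd
    (fun s' hs' b q hq => (coeff_le hs' b hq).trans hcc) (fun t' ht' s' hs' b q hq => ?_)
    hcoeff hpast hp
  rcases hs'.2.eq_or_lt with rfl | hlt
  · exact (H.abs_cov_mul_coeff_self_le hL ht hc0 hcov hj.le ht' b hq).trans hcc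
  · rw [abs_mul, sq]
    exact mul_le_mul (H.abs_cov_le_of_boundedBefore hc hbefore ht' ⟨hs'.1, hlt⟩ b hq)
      (coeff_le hs' b hq) (abs_nonneg _) hc0

/- The coefficients no longer evolve in this Grönwall argument: only the variance feeds back on
itself, so the first predicate merely records `c ≤ g`. -/
lemma sweepCovLE_succ_gronwallConst (H : IsLinearTP T L ξ ℓ' Γ C f χ) (hL : 0 < L) (ht : t < T)
    (hc : 1 ≤ c) (hbefore : BoundedBefore Γ C t c)
    (hcoeff : ∀ j ≤ L, SweepCoeffLE Γ L t a j c) (hcov : ∀ j < L, SweepCovLE C L t t a j c) :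
    ∀ j < L, SweepCovLE C L t (t + 1) a j (gronwallConst (2 * (t + 2) ^ 2 * c ^ 2) c) := by
  have hc0 : 0 ≤ c := by linarith
  refine (coupled_gronwall (P := fun _ g => c ≤ g) (fun _ _ _ hgg' hg => hg.trans hgg')
    (SweepCovLE.monotone C L t (t + 1) a) (by positivity) hc0 le_rfl ?_ ?_).2
  · intro j _ g d hg hd hcg _
    exact hcg.trans (le_add_of_nonneg_right (by positivity))
  · intro j hj g d _ hd hcg hpast
    refine SweepCovLE.monotone C L t (t + 1) a j ?_
      (H.sweepCovLE_succ_of_past hL ht hc hbefore hcov hj (hcoeff j hj.le) hd hpast)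
    gcongr

end Variance

lemma sweepBounded_sweepConst (H : IsLinearTP T L ξ ℓ' Γ C f χ) (hL : 0 < L) (ht : t < T)
    {a : Bool} {K W : ℝ} (hK : 1 ≤ K) (hbefore : BoundedBefore Γ C t K)
    (hinit : |if a then χ t else ξ t| ≤ W) :
    SweepBounded Γ C t a (sweepConst t (sweepConst t K W) (sweepConst t K W)) := by
  have hW : 0 ≤ W := (abs_nonneg _).trans hinit
  obtain ⟨hcoeff, hcov⟩ := H.sweep_gronwallConst hL ht hK hbefore hinit
  have hKc : K ≤ sweepConst t K W := le_sweepConst t K hW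
  have hGc : gronwallConst (2 * (t + 2) ^ 2 * K ^ 2) W ≤ sweepConst t K W :=
    gronwallConst_le_sweepConst t W (by linarith)
  set c := sweepConst t K W
  have hc : 1 ≤ c := hK.trans hKc
  have hcoeff_c : ∀ j ≤ L, SweepCoeffLE Γ L t a j c := fun j hj =>
    SweepCoeffLE.monotone Γ L t a j hGc (hcoeff j hj)
  have hcov_c : ∀ j < L, SweepCovLE C L t t a j c := fun j hj =>
    SweepCovLE.monotone C L t t a j hGc (hcov j hj)
  have hvar := H.sweepCovLE_succ_gronwallConst hL ht hc (hbefore.mono hKc) hcoeff_c hcov_c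
  refine ⟨fun r hr b p hp q hq => ?_, fun r hr p hp => ?_⟩
  · obtain ⟨j, hj, hpj⟩ := H.exists_coeff_eq_sweepPos hL ht a hp
    rw [hpj r hr b q hq]
    exact (H.abs_coeff_le_of_sweepCoeffLE hL ht hc hj (hcoeff_c j hj) hr b hq).trans
      (le_sweepConst t c (by linarith))
  · rcases hr.1.eq_or_lt with rfl | hr0
    · rw [H.C_mixed t (by omega), abs_zero]
      linarith [le_sweepConst t c (show 0 ≤ c by linarith)]
    · lift r to ℕ using by omega
      obtain ⟨j, hj, hpj⟩ := exists_mem_layerCell_sweepLayer hL a hp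
      exact (hvar j hj r (by have := hr.2; omega) p hpj).trans
        (gronwallConst_le_sweepConst t c (by linarith))

end IsLinearTP

lemma exists_forall_sweepBounded {T : ℕ} {ξ : ℕ → ℝ} {ℓ' : ℕ → ℝ → ℝ} {t : ℕ} (ht : t < T)
    (hℓ' : Continuous (ℓ' t)) {K : ℝ} (hK : 1 ≤ K) :
    ∃ c, ∀ (L : ℕ) Γ C f χ, 0 < L → IsLinearTP T L ξ ℓ' Γ C f χ → BoundedBefore Γ C t K →
      ∀ a, SweepBounded Γ C t a c := by
  set forward := sweepConst t (sweepConst t K |ξ t|) (sweepConst t K |ξ t|)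
  obtain ⟨X, hX⟩ := isCompact_Icc.exists_bound_of_continuousOn (s := Set.Icc (-forward) forward)
    hℓ'.continuousOn
  set backward := sweepConst t (sweepConst t K X) (sweepConst t K X)
  refine ⟨max forward backward, fun L Γ C f χ hL H hbefore => ?_⟩
  have hforward : SweepBounded Γ C t false forward :=
    H.sweepBounded_sweepConst hL ht hK hbefore le_rfl
  have hf : f t ∈ Set.Icc (-forward) forward := by
    rw [H.f_def t ht, Set.mem_Icc, ← abs_le]
    exact hforward.coeff_le (-1) ⟨le_rfl, by omega⟩ true 1 ⟨zero_le_one, le_rfl⟩ 1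
      ⟨zero_lt_one, le_rfl⟩
  have hχ : |χ t| ≤ X := by
    rw [H.χ_def t ht]
    exact hX _ hf
  have hbackward : SweepBounded Γ C t true backward :=
    H.sweepBounded_sweepConst hL ht hK hbefore hχ
  rintro (_ | _)
  · exact hforward.mono (le_max_left _ _)
  · exact hbackward.mono (le_max_right _ _)

lemma exists_forall_boundedBefore {T : ℕ} {ξ : ℕ → ℝ} {ℓ' : ℕ → ℝ → ℝ}
    (hℓ' : ∀ t, Continuous (ℓ' t)) {t : ℕ} (ht : t ≤ T) :
    ∃ c, 1 ≤ c ∧ ∀ (L : ℕ) Γ C f χ, 0 < L → IsLinearTP T L ξ ℓ' Γ C f χ →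
      BoundedBefore Γ C t c := by
  induction t with
  | zero => exact ⟨1, le_rfl, fun L Γ C f χ _ _ s hs => absurd hs s.not_lt_zero⟩
  | succ t ih =>
    obtain ⟨K, hK, hbefore⟩ := ih (by omega)
    obtain ⟨c, hc⟩ := exists_forall_sweepBounded (ξ := ξ) (show t < T by omega) (hℓ' t) hK
    refine ⟨max K c, hK.trans (le_max_left _ _), fun L Γ C f χ hL H => ?_⟩
    have hbefore_t := hbefore L Γ C f χ hL H
    exact Nat.forall_lt_succ_right.2 ⟨hbefore_t.mono (le_max_left _ _),
      fun a => (hc L Γ C f χ hL H hbefore_t a).mono (le_max_right _ _)⟩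

theorem stmt_11_general (T : ℕ) (ξ : ℕ → ℝ) (ℓ' : ℕ → ℝ → ℝ) (hℓ' : ∀ t, Continuous (ℓ' t)) :
    ∃ c : ℝ, 0 < c ∧ ∀ (L : ℕ) Γ C f χ, 0 < L → IsLinearTP T L ξ ℓ' Γ C f χ →
      ∀ t : ℕ, t < T → ∀ r : ℤ, -1 ≤ r → r ≤ (t : ℤ) → ∀ a b : Bool,
        ∀ p : ℝ, 0 ≤ p → p ≤ 1 → ∀ q : ℝ, 0 < q → q ≤ 1 →
          |Γ t r a b p q| ≤ c ∧ (0 < p → |C (t : ℤ) r a p| ≤ c) := by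
  obtain ⟨c, hc, hbound⟩ := exists_forall_boundedBefore (ξ := ξ) hℓ' (le_refl T)
  refine ⟨c, by linarith, ?_⟩
  intro L Γ C f χ hL H t ht r hr hrt a b p hp0 hp1 q hq0 hq1
  obtain ⟨coeff_le, cov_le⟩ := hbound L Γ C f χ hL H t ht a
  exact ⟨coeff_le r ⟨hr, hrt⟩ b p ⟨hp0, hp1⟩ q ⟨hq0, hq1⟩,
    fun hp => cov_le r ⟨hr, hrt⟩ p ⟨hp, hp1⟩⟩

/-- Uniform boundedness: `|Γ^L| ≤ c` and `|C^L| ≤ c` for all `L = 2^k`,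
`k ≥ k₀`, uniformly over all admissible indices and arguments. -/
theorem stmt_11
    (T : ℕ) (hT : 1 ≤ T) (ξ : ℕ → ℝ) (ℓ : ℕ → ℝ → ℝ) (ℓ' : ℕ → ℝ → ℝ)
    (hderiv : ∀ (t : ℕ) (x : ℝ), HasDerivAt (ℓ t) (ℓ' t x) x)
    (hlip : ∀ t : ℕ, LocallyLipschitz (ℓ' t))
    (Γ : ℕ → ℕ → ℤ → Bool → Bool → ℝ → ℝ → ℝ)
    (C : ℕ → ℤ → ℤ → Bool → ℝ → ℝ)
    (f χ : ℕ → ℕ → ℝ)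
    (hTP : ∀ L : ℕ, 1 ≤ L → IsLinearTP T L ξ ℓ' (Γ L) (C L) (f L) (χ L)) :
    ∃ c : ℝ, 0 < c ∧ ∃ k₀ : ℕ, ∀ k : ℕ, k₀ ≤ k →
      ∀ t : ℕ, t < T → ∀ r : ℤ, -1 ≤ r → r ≤ (t : ℤ) → ∀ a b : Bool,
        ∀ p : ℝ, 0 ≤ p → p ≤ 1 → ∀ q : ℝ, 0 < q → q ≤ 1 →
          |Γ (2 ^ k) t r a b p q| ≤ c ∧
          (0 < p → |C (2 ^ k) (t : ℤ) r a p| ≤ c) := by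
  obtain ⟨c, hc, hbound⟩ := stmt_11_general T ξ ℓ' fun t => (hlip t).continuous
  exact ⟨c, hc, 0, fun k _ =>
    hbound _ _ _ _ _ (Nat.two_pow_pos k) (hTP _ Nat.one_le_two_pow)⟩
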